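/- In the finite-horizon optimal stopping model with the risk-neutral choice R_t(μ) = ∫_ℝ z dμ(z) for every t (so that R_t((f)_♯ Q_t(·|x)) = ∫ f dQ_t(·|x)), suppose each kernel Q_t is stochastically increasing with respect to the componentwise order on X, and the one-step loss M_t is decreasing on X for every t < T. Then the continuation loss L_t is decreasing on X for every t < T. -/

import Mathlib

/-!
Let `D_t = s_t - v_t` be the gain from being allowed to continue at time `t`. Linearity of the
integral gives `L_t = M_t - ∫ D_{t+1} dQ_t`, and the recursion for `v_t` gives
`D_t = max 0 (-L_t)`, with `D_T = 0`. Hence, by backward induction, every `D_t` is increasing: if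
`D_{t+1}` is increasing, so is its integral against the stochastically increasing kernel `Q_t`,
so `L_t` is decreasing, and therefore `D_t` is increasing. The induction also carries
measurability and boundedness of `v_t`, so that the integrals are genuine.
-/

open MeasureTheory

/-- A real-valued function is bounded. -/
def IsBddFun {α : Type*} (f : α → ℝ) : Prop := ∃ C : ℝ, ∀ x, |f x| ≤ C

/-- First-order stochastic dominance `μ ⪯_sd ν` on a (partially) ordered measurable space. -/
def FOSDle {α : Type*} [MeasurableSpace α] [Preorder α] (μ ν : Measure α) : Prop :=
  ∀ f : α → ℝ, Measurable f → IsBddFun f → Monotone f → ∫ x, f x ∂μ ≤ ∫ x, f x ∂ν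

/-- The risk-neutral functional applied to the law of `f` is the expectation of `f`. -/
lemma integral_id_map {α : Type*} [MeasurableSpace α] (μ : Measure α) {f : α → ℝ}
    (hf : Measurable f) : ∫ z, z ∂(Measure.map f μ) = ∫ x, f x ∂μ :=
  integral_map hf.aemeasurable aestronglyMeasurable_id

lemma IsBddFun.integrable {α : Type*} [MeasurableSpace α] {μ : Measure α} [IsFiniteMeasure μ]
    {f : α → ℝ} (hb : IsBddFun f) (hf : Measurable f) : Integrable f μ := by
  obtain ⟨C, hC⟩ := hb
  exact Integrable.of_bound hf.aestronglyMeasurable C (Filter.Eventually.of_forall hC)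

lemma IsBddFun.sub {α : Type*} {f g : α → ℝ} (hf : IsBddFun f) (hg : IsBddFun g) :
    IsBddFun fun x => f x - g x := by
  obtain ⟨C, hC⟩ := hf
  obtain ⟨D, hD⟩ := hg
  exact ⟨C + D, fun x => (abs_sub _ _).trans (add_le_add (hC x) (hD x))⟩

lemma IsBddFun.add {α : Type*} {f g : α → ℝ} (hf : IsBddFun f) (hg : IsBddFun g) :
    IsBddFun fun x => f x + g x := by
  obtain ⟨C, hC⟩ := hf
  obtain ⟨D, hD⟩ := hg
  exact ⟨C + D, fun x => (abs_add_le _ _).trans (add_le_add (hC x) (hD x))⟩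

lemma IsBddFun.min {α : Type*} {f g : α → ℝ} (hf : IsBddFun f) (hg : IsBddFun g) :
    IsBddFun fun x => min (f x) (g x) := by
  obtain ⟨C, hC⟩ := hf
  obtain ⟨D, hD⟩ := hg
  exact ⟨max C D, fun x => abs_min_le_max_abs_abs.trans (max_le_max (hC x) (hD x))⟩

lemma IsBddFun.integral {α : Type*} [MeasurableSpace α] {Q : α → Measure α}
    (hQ : ∀ x, IsProbabilityMeasure (Q x)) {f : α → ℝ} (hf : IsBddFun f) :
    IsBddFun fun x => ∫ y, f y ∂(Q x) := by
  obtain ⟨C, hC⟩ := hf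
  refine ⟨C, fun x => ?_⟩
  have := hQ x
  simpa using norm_integral_le_of_norm_le_const (μ := Q x) (f := f) (C := C)
    (Filter.Eventually.of_forall hC)

/-- in the risk-neutral model (`R_t(μ) = ∫ z dμ(z)`), if each kernel `Q_t`
is stochastically increasing and the one-step loss `M_t` is decreasing, then the
continuation loss `L_t` is decreasing, for every `t < T`. -/
theorem risk_neutral_one_step_loss_certifies (n T : ℕ) (X : Set (Fin n → ℝ))
    (hX : MeasurableSet X)
    (Q : ℕ → X → Measure X)
    (hQprob : ∀ t, t < T → ∀ x, IsProbabilityMeasure (Q t x))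
    (s : ℕ → X → ℝ) (c : ℕ → X → ℝ)
    (hs : ∀ t, t ≤ T → Measurable (s t) ∧ IsBddFun (s t))
    (hc : ∀ t, t < T → Measurable (c t) ∧ IsBddFun (c t))
    (R : ℕ → Measure ℝ → ℝ)
    (hRdef : ∀ t, t < T → ∀ μ : Measure ℝ, R t μ = ∫ z, z ∂μ)
    (hRmeas : ∀ t, t < T → ∀ f : X → ℝ, Measurable f → IsBddFun f →
      Measurable fun x : X => R t (Measure.map f (Q t x)))
    (hQmono : ∀ t, t < T → ∀ x x' : X, x ≤ x' → FOSDle (Q t x) (Q t x'))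
    (v : ℕ → X → ℝ)
    (hvT : ∀ x, v T x = s T x)
    (hrec : ∀ t, t < T → ∀ x,
      v t x = min (s t x) (c t x + R t (Measure.map (v (t + 1)) (Q t x))))
    (L M : ℕ → X → ℝ)
    (hL : ∀ t, t < T → ∀ x,
      L t x = R t (Measure.map (v (t + 1)) (Q t x)) + c t x - s t x)
    (hM : ∀ t, t < T → ∀ x,
      M t x = R t (Measure.map (s (t + 1)) (Q t x)) + c t x - s t x)
    (hMdec : ∀ t, t < T → Antitone (M t)) :
    ∀ t, t < T → Antitone (L t) := by
  -- One backward step: an increasing gain at time `t + 1` makes `L t` decreasing.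
  have step : ∀ t, t < T → Measurable (v (t + 1)) → IsBddFun (v (t + 1)) →
      Monotone (fun x => s (t + 1) x - v (t + 1) x) → Antitone (L t) := by
    intro t ht hvm hvb hmono
    obtain ⟨hsm, hsb⟩ := hs (t + 1) ht
    have hLM : ∀ x, L t x = M t x - ∫ y, (s (t + 1) y - v (t + 1) y) ∂(Q t x) := by
      intro x
      have := hQprob t ht x
      rw [hL t ht, hM t ht, hRdef t ht, hRdef t ht, integral_id_map _ hvm,
        integral_id_map _ hsm, integral_sub (hsb.integrable hsm) (hvb.integrable hvm)]
      ring
    intro x x' hxx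
    rw [hLM, hLM]
    exact sub_le_sub (hMdec t ht hxx)
      (hQmono t ht x x' hxx _ (hsm.sub hvm) (hsb.sub hvb) hmono)
  have main : ∀ t, t ≤ T → Measurable (v t) ∧ IsBddFun (v t) ∧
      Monotone (fun x => s t x - v t x) := by
    intro t ht
    induction ht using Nat.decreasingInduction with
    | self =>
      rw [funext hvT]
      exact ⟨(hs T le_rfl).1, (hs T le_rfl).2, fun x y _ => by simp⟩
    | @of_succ t ht ih =>
      obtain ⟨hvm, hvb, hmono⟩ := ih
      obtain ⟨hsm, hsb⟩ := hs t ht.le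
      obtain ⟨hcm, hcb⟩ := hc t ht
      have hLt := step t ht hvm hvb hmono
      have hRb : IsBddFun fun x => R t (Measure.map (v (t + 1)) (Q t x)) := by
        simp only [hRdef t ht, integral_id_map _ hvm]
        exact hvb.integral (hQprob t ht)
      refine ⟨?_, ?_, ?_⟩
      · rw [funext (hrec t ht)]
        exact hsm.min (hcm.add (hRmeas t ht _ hvm hvb))
      · rw [funext (hrec t ht)]
        exact hsb.min (hcb.add hRb)
      · have hD : ∀ x, s t x - v t x = max 0 (-L t x) := by
          intro x
          rw [hrec t ht, hL t ht, ← max_sub_sub_left, sub_self]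
          congr 1
          ring
        intro x y hxy
        simp only [hD]
        exact max_le_max le_rfl (neg_le_neg (hLt hxy))
  intro t ht
  obtain ⟨hvm, hvb, hmono⟩ := main (t + 1) ht
  exact step t ht hvm hvb hmono
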